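/- Let C be a model category and let X and Y be objects of C that are both fibrant and cofibrant. Let γ : C ⟶ Ho(C) denote the localization functor at the weak equivalences. Then every isomorphism γ(X) ≅ γ(Y) in Ho(C) is equal to γ(w) for some weak equivalence w : X ⟶ Y in C. -/

import Mathlib

open CategoryTheory CategoryTheory.Limits

universe v u

/-- `f` is a retract of `g` in the arrow category. -/
def IsRetractOf {C : Type u} [Category.{v} C] {X Y X' Y' : C}
    (f : X ⟶ Y) (g : X' ⟶ Y') : Prop :=
  ∃ (iX : X ⟶ X') (rX : X' ⟶ X) (iY : Y ⟶ Y') (rY : Y' ⟶ Y),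
    iX ≫ rX = 𝟙 X ∧ iY ≫ rY = 𝟙 Y ∧ iX ≫ g = f ≫ iY ∧ g ≫ rY = rX ≫ f

/-- A (Quillen closed) model structure on a finitely bicomplete category `C`: classes of
weak equivalences, fibrations and cofibrations satisfying the two-out-of-three axiom,
closure under retracts, the lifting axioms and the factorization axioms. -/
structure ModelStructure (C : Type u) [Category.{v} C]
    [HasFiniteLimits C] [HasFiniteColimits C] where
  /-- weak equivalences -/
  W : MorphismProperty C
  /-- fibrations -/
  Fib : MorphismProperty C
  /-- cofibrations -/
  Cof : MorphismProperty C
  W_comp : ∀ {X Y Z : C} (f : X ⟶ Y) (g : Y ⟶ Z), W f → W g → W (f ≫ g)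
  W_cancel_left : ∀ {X Y Z : C} (f : X ⟶ Y) (g : Y ⟶ Z), W f → W (f ≫ g) → W g
  W_cancel_right : ∀ {X Y Z : C} (f : X ⟶ Y) (g : Y ⟶ Z), W g → W (f ≫ g) → W f
  W_retract : ∀ {X Y X' Y' : C} (f : X ⟶ Y) (g : X' ⟶ Y'), IsRetractOf f g → W g → W f
  Fib_retract : ∀ {X Y X' Y' : C} (f : X ⟶ Y) (g : X' ⟶ Y'), IsRetractOf f g → Fib g → Fib f
  Cof_retract : ∀ {X Y X' Y' : C} (f : X ⟶ Y) (g : X' ⟶ Y'), IsRetractOf f g → Cof g → Cof f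
  lift_cof_trivFib : ∀ {A B X Y : C} (i : A ⟶ B) (p : X ⟶ Y),
    Cof i → Fib p → W p → HasLiftingProperty i p
  lift_trivCof_fib : ∀ {A B X Y : C} (i : A ⟶ B) (p : X ⟶ Y),
    Cof i → W i → Fib p → HasLiftingProperty i p
  factor_cof_trivFib : ∀ {X Y : C} (f : X ⟶ Y),
    ∃ (Z : C) (i : X ⟶ Z) (p : Z ⟶ Y), Cof i ∧ Fib p ∧ W p ∧ i ≫ p = f
  factor_trivCof_fib : ∀ {X Y : C} (f : X ⟶ Y),
    ∃ (Z : C) (i : X ⟶ Z) (p : Z ⟶ Y), Cof i ∧ W i ∧ Fib p ∧ i ≫ p = f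

namespace ModelStructure

variable {C : Type u} [Category.{v} C] [HasFiniteLimits C] [HasFiniteColimits C]

/-- An object is fibrant if the map to the terminal object is a fibration. -/
def Fibrant (M : ModelStructure C) (X : C) : Prop := M.Fib (terminal.from X)

/-- An object is cofibrant if the map from the initial object is a cofibration. -/
def Cofibrant (M : ModelStructure C) (X : C) : Prop := M.Cof (initial.to X)

end ModelStructure

/-!
A morphism of a model category is a weak equivalence as soon as a localization functor `L` inverts
it. Resolutions reduce this to a fibration `p` between bifibrant objects. There, homotopy classes
are morphisms in the homotopy category, so the inverse of `L p` comes from a homotopy inverse `q`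
of `p`. The covering homotopy theorem deforms `q` to a strict section `s`; then `p ≫ s` is
homotopic to the identity, hence a weak equivalence, and `p` is a retract of it.

An isomorphism from `L X` to `L Y` lifts to a morphism `X ⟶ Y` when `X` is cofibrant and `Y` is
fibrant, and this lift is then a weak equivalence.
-/

open HomotopicalAlgebra

section ModelCategory

variable {C : Type*} [Category* C]

lemma weakEquivalence_of_section [CategoryWithWeakEquivalences C]
    [(weakEquivalences C).IsStableUnderRetracts] {E B : C} {p : E ⟶ B} {s : B ⟶ E}
    (hs : s ≫ p = 𝟙 B) [WeakEquivalence (p ≫ s)] : WeakEquivalence p := by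
  have hp : RetractArrow p (p ≫ s) :=
    { i := Arrow.homMk (𝟙 E) s
      r := Arrow.homMk (𝟙 E) p (by simp [hs])
      retract := by ext <;> simp [hs] }
  exact ⟨MorphismProperty.of_retract hp (mem_weakEquivalences (p ≫ s))⟩

variable [ModelCategory C]

lemma exists_section_of_leftHomotopyRel_id {E B : C} [IsCofibrant B] (p : E ⟶ B) [Fibration p]
    {q : B ⟶ E} (hq : LeftHomotopyRel (q ≫ p) (𝟙 B)) :
    ∃ s : B ⟶ E, s ≫ p = 𝟙 B ∧ LeftHomotopyRel q s := by
  obtain ⟨P, _, ⟨h⟩⟩ := hq.exists_good_cylinder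
  obtain ⟨s, h', fac⟩ := h.covering_homotopy p q rfl
  exact ⟨s, by rw [← h'.h₁, Category.assoc, fac, h.h₁], h'.leftHomotopyRel⟩

variable {H : Type*} [Category* H] (L : C ⥤ H) [L.IsLocalization (weakEquivalences C)]

lemma isIso_map_of_weakEquivalence {X Y : C} (f : X ⟶ Y) [WeakEquivalence f] :
    IsIso (L.map f) :=
  Localization.inverts L (weakEquivalences C) f (mem_weakEquivalences f)

lemma weakEquivalence_of_fibration_of_isIso_map {E B : C} [IsCofibrant E] [IsFibrant E]
    [IsCofibrant B] [IsFibrant B] (p : E ⟶ B) [Fibration p] [IsIso (L.map p)] :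
    WeakEquivalence p := by
  obtain ⟨q, hq⟩ := map_surjective_of_isLocalization L B E (inv (L.map p))
  have hqp : LeftHomotopyRel (q ≫ p) (𝟙 B) := by
    simp [LeftHomotopyRel.iff_map_eq L, hq]
  obtain ⟨s, hs, hqs⟩ := exists_section_of_leftHomotopyRel_id p hqp
  have map_s : L.map s = inv (L.map p) := by
    rw [← hq, (LeftHomotopyRel.iff_map_eq L B E).1 hqs]
  obtain ⟨_, ⟨h⟩⟩ : LeftHomotopyRel (p ≫ s) (𝟙 E) := by
    simp [LeftHomotopyRel.iff_map_eq L, map_s]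
  have : WeakEquivalence (p ≫ s) := h.weakEquivalence_iff.2 inferInstance
  exact weakEquivalence_of_section hs

lemma weakEquivalence_of_isCofibrant_of_isIso_map {X Y : C} [IsCofibrant X] [IsCofibrant Y]
    (f : X ⟶ Y) [IsIso (L.map f)] : WeakEquivalence f := by
  let r := FibrantObject.HoCat.iResolutionObj Y
  let d := MorphismProperty.factorizationData (trivialCofibrations C) (fibrations C) (f ≫ r)
  have := isCofibrant_of_cofibration r
  have := isCofibrant_of_cofibration d.i
  have := isFibrant_of_fibration d.p
  have := isIso_map_of_weakEquivalence L r
  have := isIso_map_of_weakEquivalence L d.i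
  have : IsIso (L.map d.i ≫ L.map d.p) := by
    rw [← L.map_comp, d.fac, L.map_comp]
    infer_instance
  have : IsIso (L.map d.p) := IsIso.of_isIso_comp_left (L.map d.i) (L.map d.p)
  have := weakEquivalence_of_fibration_of_isIso_map L d.p
  rw [← weakEquivalence_postcomp_iff f r, ← d.fac]
  infer_instance

theorem weakEquivalence_of_isIso_map {X Y : C} (f : X ⟶ Y) [IsIso (L.map f)] :
    WeakEquivalence f := by
  let f' := CofibrantObject.HoCat.resolutionMap f
  let pX := CofibrantObject.HoCat.pResolutionObj X
  let pY := CofibrantObject.HoCat.pResolutionObj Y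
  have := isIso_map_of_weakEquivalence L pX
  have := isIso_map_of_weakEquivalence L pY
  have : IsIso (L.map f' ≫ L.map pY) := by
    rw [← L.map_comp, CofibrantObject.HoCat.resolutionMap_fac, L.map_comp]
    infer_instance
  have : IsIso (L.map f') := IsIso.of_isIso_comp_right (L.map f') (L.map pY)
  rw [← CofibrantObject.HoCat.weakEquivalence_resolutionMap_iff]
  exact weakEquivalence_of_isCofibrant_of_isIso_map L f'

theorem exists_weakEquivalence_map_eq {X Y : C} [IsCofibrant X] [IsFibrant Y]
    (e : L.obj X ≅ L.obj Y) : ∃ w : X ⟶ Y, WeakEquivalence w ∧ L.map w = e.hom := by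
  obtain ⟨w, hw⟩ := map_surjective_of_isLocalization L X Y e.hom
  have : IsIso (L.map w) := hw ▸ inferInstance
  exact ⟨w, weakEquivalence_of_isIso_map L w, hw⟩

end ModelCategory

lemma IsRetractOf.of_retractArrow {C : Type u} [Category.{v} C] {X Y X' Y' : C}
    {f : X ⟶ Y} {g : X' ⟶ Y'} (h : RetractArrow f g) : IsRetractOf f g :=
  ⟨h.i.left, h.r.left, h.i.right, h.r.right,
    h.retract_left, h.retract_right, h.i_w, h.r_w.symm⟩

namespace ModelStructure

variable {C : Type u} [Category.{v} C] [HasFiniteLimits C] [HasFiniteColimits C]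

/-- The Mathlib model category given by a model structure; it has the same three classes of
morphisms by definition. It is not a global instance, since `C` may carry several model
structures. -/
abbrev toModelCategory (M : ModelStructure C) : ModelCategory C where
  categoryWithFibrations := ⟨M.Fib⟩
  categoryWithCofibrations := ⟨M.Cof⟩
  categoryWithWeakEquivalences := ⟨M.W⟩
  cm2 :=
    { comp_mem := M.W_comp
      of_postcomp := M.W_cancel_right
      of_precomp := M.W_cancel_left }
  cm3a := ⟨fun h ↦ M.W_retract _ _ (.of_retractArrow h)⟩
  cm3b := ⟨fun h ↦ M.Fib_retract _ _ (.of_retractArrow h)⟩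
  cm3c := ⟨fun h ↦ M.Cof_retract _ _ (.of_retractArrow h)⟩
  cm4a i p hi hw hp := M.lift_trivCof_fib i p hi.mem hw.mem hp.mem
  cm4b i p hi hp hw := M.lift_cof_trivFib i p hi.mem hp.mem hw.mem
  cm5a := ⟨fun f ↦
    have ⟨Z, i, p, hi, hw, hp, fac⟩ := M.factor_trivCof_fib f
    ⟨⟨Z, i, p, fac, ⟨hi, hw⟩, hp⟩⟩⟩
  cm5b := ⟨fun f ↦
    have ⟨Z, i, p, hi, hp, hw, fac⟩ := M.factor_cof_trivFib f
    ⟨⟨Z, i, p, fac, hi, ⟨hp, hw⟩⟩⟩⟩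

end ModelStructure

theorem stmt_9_general {C : Type u} [Category.{v} C] [HasFiniteLimits C] [HasFiniteColimits C]
    (M : ModelStructure C) {H : Type*} [Category* H] (L : C ⥤ H) [hL : L.IsLocalization M.W]
    {X Y : C} (hXc : M.Cofibrant X) (hYf : M.Fibrant Y) (e : L.obj X ≅ L.obj Y) :
    ∃ w : X ⟶ Y, M.W w ∧ L.map w = e.hom := by
  let := M.toModelCategory
  have : L.IsLocalization (weakEquivalences C) := hL
  have : IsCofibrant X := ⟨hXc⟩
  have : IsFibrant Y := ⟨hYf⟩
  obtain ⟨w, hw, map_w⟩ := exists_weakEquivalence_map_eq L e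
  exact ⟨w, hw.mem, map_w⟩

/-- In a model category, if `X` and `Y` are both fibrant and cofibrant, then
every isomorphism `γ(X) ≅ γ(Y)` in the homotopy category is the image under the localization
functor `γ` of a weak equivalence `w : X ⟶ Y`. -/
theorem stmt_9 {C : Type u} [Category.{v} C] [HasFiniteLimits C] [HasFiniteColimits C]
    (M : ModelStructure C) (X Y : C)
    (hXf : M.Fibrant X) (hXc : M.Cofibrant X) (hYf : M.Fibrant Y) (hYc : M.Cofibrant Y)
    (e : M.W.Q.obj X ≅ M.W.Q.obj Y) :
    ∃ w : X ⟶ Y, M.W w ∧ M.W.Q.map w = e.hom := by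
  exact stmt_9_general M M.W.Q hXc hYf e
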